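/- arXiv:math/0512636 — 6 statements merged into one kernel-verified Lean document; each statement's English description precedes it below -/
import Mathlib

section
/- Let 0 < p < 1/2, let μ_p be the product measure on {0,1}^n with each coordinate equal to 1 with probability p, and let f : {0,1}^n → {0,1} be a non-constant Boolean function. Let I_i = Pr_{x∼μ_p}[f(x) ≠ f(x⊕e_i)], let σ² = E_{μ_p}[f²] − (E_{μ_p} f)² > 0, and let C(p) = ((1−2p)/(p(1−p))) · 1/(log(1−p) − log p). Then Σ_{i=1}^n I_i² ≥ ( σ² / (4 p² (1−p)²) ) · exp( − (Σ_{i=1}^n I_i) / (C(p) σ²) ). -/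
open Finset

/-- `x ⊕ e_i` : flip the `i`-th coordinate of `x`. -/
def flipAt {n : ℕ} (x : Fin n → Bool) (i : Fin n) : Fin n → Bool :=
  Function.update x i (!x i)

/-- Weight of the point `x` under the product measure `μ_p` on `{0,1}^n` in which each
coordinate independently equals `1` with probability `p`. -/
noncomputable def pWt {n : ℕ} (p : ℝ) (x : Fin n → Bool) : ℝ :=
  ∏ k : Fin n, if x k then p else 1 - p

/-- Expectation with respect to `μ_p`. -/
noncomputable def pE {n : ℕ} (p : ℝ) (f : (Fin n → Bool) → ℝ) : ℝ :=
  ∑ x : Fin n → Bool, pWt p x * f x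

/-- Influence of the `i`-th variable under `μ_p`: `I_i = Pr_{x∼μ_p}[f(x) ≠ f(x⊕e_i)]`. -/
noncomputable def pInfl {n : ℕ} (p : ℝ) (f : (Fin n → Bool) → Bool) (i : Fin n) : ℝ :=
  pE p (fun x => if f x ≠ f (flipAt x i) then 1 else 0)

/-- The optimal logarithmic Sobolev constant of `({0,1}^n, μ_p)`:
`C(p) = ((1-2p)/(p(1-p))) · 1/(log(1-p) - log p)`. -/
noncomputable def lsConst (p : ℝ) : ℝ :=
  (1 - 2 * p) / (p * (1 - p)) * (1 / (Real.log (1 - p) - Real.log p))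


lemma sinh_chord {t t0 : ℝ} (ht : 0 < t) (h : t ≤ t0) :
    Real.sinh t * t0 ≤ t * Real.sinh t0 := by
  have hc : ConvexOn ℝ (Set.Ici 0) Real.sinh := by
    apply MonotoneOn.convexOn_of_deriv (convex_Ici 0) Real.continuous_sinh.continuousOn
      Real.differentiable_sinh.differentiableOn
    rw [Real.deriv_sinh, interior_Ici]
    intro a ha b hb hab
    have ha' : 0 < a := ha
    have hb' : 0 < b := hb
    exact Real.cosh_le_cosh.2 (by rwa [abs_of_pos ha', abs_of_pos hb'])
  have h0 : 0 < t0 := ht.trans_le h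
  have h1 : 0 ≤ 1 - t / t0 := by rw [sub_nonneg]; exact (div_le_one h0).2 h
  have h2 : 0 ≤ t / t0 := by positivity
  have := hc.2 (Set.mem_Ici.2 le_rfl) (Set.mem_Ici.2 h0.le) h1 h2 (by ring)
  simp only [smul_eq_mul, mul_zero, Real.sinh_zero, zero_add] at this
  rw [div_mul_cancel₀ _ h0.ne'] at this
  calc Real.sinh t * t0 ≤ (t / t0 * Real.sinh t0) * t0 := by gcongr
    _ = t * Real.sinh t0 := by field_simp

noncomputable def tau (u : ℝ) : ℝ := (Real.log (1 - u) - Real.log u) / 2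

lemma sinh_tau {u : ℝ} (h0 : 0 < u) (h1 : u < 1) :
    Real.sinh (tau u) = (1 - 2 * u) / (2 * √(u * (1 - u))) := by
  have h2 : 0 < 1 - u := by linarith
  have e1 : Real.exp (tau u) = √(1 - u) / √u := by
    unfold tau
    rw [sub_div, Real.exp_sub, ← Real.log_sqrt h2.le, ← Real.log_sqrt h0.le,
      Real.exp_log (by positivity), Real.exp_log (by positivity)]
  rw [Real.sinh_eq, Real.exp_neg, e1, Real.sqrt_mul h0.le]
  have a := Real.sq_sqrt h0.le
  have b := Real.sq_sqrt h2.le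
  have : 0 < √u := by positivity
  have : 0 < √(1 - u) := by positivity
  field_simp
  rw [a, b]; ring

lemma tau_anti {u v : ℝ} (h0 : 0 < u) (h : u ≤ v) (h1 : v < 1) : tau v ≤ tau u := by
  unfold tau
  have := Real.log_le_log h0 h
  have := Real.log_le_log (by linarith : 0 < 1 - v) (by linarith : 1 - v ≤ 1 - u)
  linarith

lemma tau_pos {u : ℝ} (h0 : 0 < u) (h1 : u < 1 / 2) : 0 < tau u := by
  unfold tau
  have := Real.log_lt_log h0 (by linarith : u < 1 - u)
  linarith

noncomputable def psi (c u : ℝ) : ℝ := Real.binEntropy u - c * √(u * (1 - u))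

lemma psi_cont (c : ℝ) : Continuous (psi c) := by
  unfold psi
  have := Real.binEntropy_continuous
  fun_prop

lemma psi_deriv (c : ℝ) {u : ℝ} (h0 : 0 < u) (h1 : u < 1) :
    HasDerivAt (psi c) (2 * tau u - c * Real.sinh (tau u)) u := by
  have h2 : 0 < 1 - u := by linarith
  have d1 := Real.hasDerivAt_binEntropy h0.ne' h1.ne
  have d2 : HasDerivAt (fun u : ℝ => u * (1 - u)) (1 - 2 * u) u := by
    have := (hasDerivAt_id u).mul ((hasDerivAt_id u).const_sub 1)
    refine this.congr_deriv ?_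
    simp only [id]; ring
  have d3 := (d2.sqrt (by positivity)).const_mul c
  refine (d1.sub d3).congr_deriv ?_
  rw [sinh_tau h0 h1]; unfold tau; ring

lemma psi_min {p u : ℝ} (hp0 : 0 < p) (hp : p < 1 / 2) (hu0 : 0 ≤ u) (hu1 : u ≤ 1) :
    psi (2 * tau p / Real.sinh (tau p)) p ≤ psi (2 * tau p / Real.sinh (tau p)) u := by
  set c := 2 * tau p / Real.sinh (tau p) with hc
  have tp := tau_pos hp0 hp
  have sp : 0 < Real.sinh (tau p) := Real.sinh_pos_iff.2 tp
  wlog h : u ≤ 1 / 2 generalizing u with H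
  · have := H (u := 1 - u) (by linarith) (by linarith) (by linarith)
    refine this.trans_eq ?_
    unfold psi
    rw [Real.binEntropy_one_sub]
    ring_nf
  rcases le_total u p with hup | hup
  · have : AntitoneOn (psi c) (Set.Icc 0 p) := by
      apply antitoneOn_of_deriv_nonpos (convex_Icc 0 p) (psi_cont c).continuousOn
      · intro x hx
        rw [interior_Icc] at hx
        exact (psi_deriv c hx.1 (by linarith [hx.2])).differentiableAt.differentiableWithinAt
      · intro x hx
        rw [interior_Icc] at hx
        rw [(psi_deriv c hx.1 (by linarith [hx.2])).deriv]
        have := sinh_chord tp (tau_anti hx.1 hx.2.le (by linarith))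
        rw [hc, sub_nonpos, div_mul_eq_mul_div, le_div_iff₀ sp]
        linarith
    exact this ⟨hu0, hup⟩ ⟨hp0.le, le_rfl⟩ hup
  · have : MonotoneOn (psi c) (Set.Icc p (1/2)) := by
      apply monotoneOn_of_deriv_nonneg (convex_Icc p (1/2)) (psi_cont c).continuousOn
      · intro x hx
        rw [interior_Icc] at hx
        exact (psi_deriv c (by linarith [hx.1]) (by linarith [hx.2])).differentiableAt.differentiableWithinAt
      · intro x hx
        rw [interior_Icc] at hx
        have hx0 : 0 < x := by linarith [hx.1]
        rw [(psi_deriv c hx0 (by linarith [hx.2])).deriv]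
        have := sinh_chord (tau_pos hx0 hx.2) (tau_anti hp0 hx.1.le (by linarith [hx.2]))
        rw [hc, sub_nonneg, div_mul_eq_mul_div, div_le_iff₀ sp]
        linarith
    exact this ⟨le_rfl, hp.le⟩ ⟨hup, h⟩ hup

noncomputable def lsK (p : ℝ) : ℝ :=
  p * (1 - p) * (Real.log (1 - p) - Real.log p) / (1 - 2 * p)

/-- one-variable form -/
lemma lsi_one {p u : ℝ} (hp0 : 0 < p) (hp : p < 1 / 2) (hu0 : 0 ≤ u) (hu1 : u ≤ 1) :
    -Real.binEntropy u - u * Real.log p - (1 - u) * Real.log (1 - p) ≤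
      lsK p * (u / p + (1 - u) / (1 - p) - 2 * (√(u * (1 - u)) / √(p * (1 - p)))) := by
  have h := psi_min hp0 hp hu0 hu1
  have hq : 0 < 1 - p := by linarith
  have hd : 0 < 1 - 2 * p := by linarith
  have hs : 0 < √(p * (1 - p)) := by positivity
  have hs2 := Real.sq_sqrt (by positivity : 0 ≤ p * (1 - p))
  have hcc : 2 * tau p / Real.sinh (tau p) = 2 * lsK p / √(p * (1 - p)) := by
    rw [sinh_tau hp0 (by linarith)]
    unfold tau lsK
    field_simp
    rw [hs2]; ring
  rw [hcc] at h
  unfold psi at h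
  rw [div_mul_cancel₀ _ hs.ne', Real.binEntropy_eq_negMulLog_add_negMulLog_one_sub p] at h
  simp only [Real.negMulLog] at h
  have e1 : lsK p * (u / p + (1 - u) / (1 - p)) - 2 * lsK p =
      u * (Real.log (1 - p) - Real.log p) - p * (Real.log (1 - p) - Real.log p) := by
    have hd' := hd.ne'
    have hK : lsK p * (1 - 2 * p) = p * (1 - p) * (Real.log (1 - p) - Real.log p) := by
      unfold lsK; rw [div_mul_cancel₀ _ hd']
    have e3 : lsK p * (u / p + (1 - u) / (1 - p)) - 2 * lsK p =
        (u - p) * (lsK p * (1 - 2 * p)) / (p * (1 - p)) := by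
      field_simp
      ring
    rw [e3, hK]
    field_simp
  have e2 : lsK p * (2 * (√(u * (1 - u)) / √(p * (1 - p)))) =
    2 * lsK p / √(p * (1 - p)) * √(u * (1 - u)) := by ring
  rw [mul_sub, e2]
  linarith

lemma lsi_two {p a b : ℝ} (hp0 : 0 < p) (hp : p < 1 / 2) (ha : 0 ≤ a) (hb : 0 ≤ b) :
    p * (a * Real.log a) + (1 - p) * (b * Real.log b)
      - (p * a + (1 - p) * b) * Real.log (p * a + (1 - p) * b) ≤
      lsK p * (√a - √b) ^ 2 := by
  have hq : 0 < 1 - p := by linarith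
  have hK : 0 ≤ lsK p := by
    have := tau_pos hp0 hp
    unfold tau at this
    unfold lsK
    apply div_nonneg _ (by linarith)
    apply mul_nonneg (by positivity) (by linarith)
  obtain ⟨m, hm⟩ : ∃ m, m = p * a + (1 - p) * b := ⟨_, rfl⟩
  have hm0 : 0 ≤ m := by rw [hm]; positivity
  rcases hm0.eq_or_lt with h0 | hmp
  · have h1 : p * a = 0 := by nlinarith [mul_nonneg hp0.le ha, mul_nonneg hq.le hb]
    have h2 : (1 - p) * b = 0 := by nlinarith [mul_nonneg hp0.le ha, mul_nonneg hq.le hb]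
    have h1' : a = 0 := by simpa [hp0.ne'] using h1
    have h2' : b = 0 := by simpa [hq.ne'] using h2
    simp [h1', h2']
  obtain ⟨u, hu⟩ : ∃ u, u = p * a / m := ⟨_, rfl⟩
  have hua : p * a = u * m := by rw [hu]; field_simp
  have hub : (1 - p) * b = (1 - u) * m := by linarith
  have hu0 : 0 ≤ u := by rw [hu]; positivity
  have hu1 : 0 ≤ 1 - u := by
    by_contra hn
    push Not at hn
    have := mul_neg_of_neg_of_pos hn hmp
    have := mul_nonneg hq.le hb
    linarith
  have haa : a = u * m / p := by field_simp; linarith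
  have hbb : b = (1 - u) * m / (1 - p) := by field_simp; linarith
  have key := mul_le_mul_of_nonneg_left (lsi_one hp0 hp hu0 (by linarith)) hmp.le
  have l1 : p * (a * Real.log a) = m * (u * Real.log u + u * Real.log m - u * Real.log p) := by
    rcases hu0.eq_or_lt with h | h
    · rw [haa, ← h]; simp
    · rw [← mul_assoc, hua, haa, Real.log_div (by positivity) hp0.ne', Real.log_mul h.ne' hmp.ne']
      ring
  have l2 : (1 - p) * (b * Real.log b) = m * ((1 - u) * Real.log (1 - u) + (1 - u) * Real.log m
      - (1 - u) * Real.log (1 - p)) := by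
    rcases hu1.eq_or_lt with h | h
    · rw [hbb, ← h]; simp
    · rw [← mul_assoc, hub, hbb, Real.log_div (by positivity) hq.ne', Real.log_mul h.ne' hmp.ne']
      ring
  have l3 : (√a - √b) ^ 2 = m * (u / p + (1 - u) / (1 - p) - 2 * (√(u * (1 - u)) / √(p * (1 - p)))) := by
    have : √a * √b = m * (√(u * (1 - u)) / √(p * (1 - p))) := by
      rw [← Real.sqrt_mul ha, ← Real.sqrt_div (by positivity), haa, hbb]
      have : u * m / p * ((1 - u) * m / (1 - p)) = m ^ 2 * (u * (1 - u) / (p * (1 - p))) := by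
        field_simp
      rw [this, Real.sqrt_mul (by positivity), Real.sqrt_sq hm0]
    have e : (√a - √b) ^ 2 = √a ^ 2 + √b ^ 2 - 2 * (√a * √b) := by ring
    rw [e, this, Real.sq_sqrt ha, Real.sq_sqrt hb, haa, hbb]
    ring
  rw [← hm, l1, l2, l3]
  rw [Real.binEntropy_eq_negMulLog_add_negMulLog_one_sub] at key
  simp only [Real.negMulLog] at key
  linarith

/-- averaging over coordinate `i` -/
noncomputable def Av {n : ℕ} (p : ℝ) (i : Fin n) (g : (Fin n → Bool) → ℝ) :
    (Fin n → Bool) → ℝ :=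
  fun x => p * g (Function.update x i true) + (1 - p) * g (Function.update x i false)

lemma pWt_nonneg {n : ℕ} {p : ℝ} (hp0 : 0 < p) (hp : p < 1 / 2) (x : Fin n → Bool) :
    0 ≤ pWt p x := by
  unfold pWt
  apply Finset.prod_nonneg
  intro k _
  split_ifs <;> linarith

lemma pE_mono {n : ℕ} {p : ℝ} (hp0 : 0 < p) (hp : p < 1 / 2) {f g : (Fin n → Bool) → ℝ}
    (h : ∀ x, f x ≤ g x) : pE p f ≤ pE p g := by
  unfold pE
  exact Finset.sum_le_sum fun x _ => mul_le_mul_of_nonneg_left (h x) (pWt_nonneg hp0 hp x)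

lemma pE_add {n : ℕ} (p : ℝ) (f g : (Fin n → Bool) → ℝ) :
    pE p (fun x => f x + g x) = pE p f + pE p g := by
  simp only [pE, mul_add, Finset.sum_add_distrib]

lemma pE_sub {n : ℕ} (p : ℝ) (f g : (Fin n → Bool) → ℝ) :
    pE p (fun x => f x - g x) = pE p f - pE p g := by
  simp only [pE, mul_sub, Finset.sum_sub_distrib]

lemma pE_smul {n : ℕ} (p c : ℝ) (f : (Fin n → Bool) → ℝ) :
    pE p (fun x => c * f x) = c * pE p f := by
  simp only [pE, Finset.mul_sum]
  exact Finset.sum_congr rfl fun x _ => by ring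

lemma pE_const {n : ℕ} (p c : ℝ) : pE p (fun _ : Fin n → Bool => c) = c := by
  have : ∑ x : Fin n → Bool, pWt p x = 1 := by
    unfold pWt
    rw [← Fintype.prod_sum (fun (_ : Fin n) (b : Bool) => if b then p else 1 - p)]
    simp
  unfold pE
  rw [← Finset.sum_mul, this, one_mul]

lemma flipAt_flipAt {n : ℕ} (x : Fin n → Bool) (i : Fin n) : flipAt (flipAt x i) i = x := by
  simp [flipAt]

lemma pWt_flip {n : ℕ} (p : ℝ) (x : Fin n → Bool) (i : Fin n) :
    pWt p (flipAt x i) * (if x i then p else 1 - p) =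
      pWt p x * (if x i then 1 - p else p) := by
  unfold pWt
  rw [← Finset.mul_prod_erase _ _ (Finset.mem_univ i), ← Finset.mul_prod_erase univ (fun k => if x k = true then p else 1 - p) (Finset.mem_univ i)]
  have : ∏ k ∈ univ.erase i, (if flipAt x i k = true then p else 1 - p) =
      ∏ k ∈ univ.erase i, (if x k = true then p else 1 - p) := by
    apply Finset.prod_congr rfl
    intro k hk
    simp [flipAt, Function.update_of_ne (Finset.ne_of_mem_erase hk)]
  rw [this]
  cases h : x i <;> simp [flipAt, h] <;> ring

lemma Av_eq {n : ℕ} (p : ℝ) (i : Fin n) (g : (Fin n → Bool) → ℝ) (x : Fin n → Bool) :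
    Av p i g x = (if x i then p else 1 - p) * g x +
      (if x i then 1 - p else p) * g (flipAt x i) := by
  have h1 : Function.update x i (x i) = x := Function.update_eq_self i x
  cases h : x i
  · rw [h] at h1
    simp [Av, flipAt, h, h1]; ring
  · rw [h] at h1
    simp [Av, flipAt, h, h1]

lemma pE_Av {n : ℕ} (p : ℝ) (i : Fin n) (g : (Fin n → Bool) → ℝ) :
    pE p (Av p i g) = pE p g := by
  unfold pE
  simp only [Av_eq, mul_add, Finset.sum_add_distrib]
  have hinv : Function.Involutive (fun x : Fin n → Bool => flipAt x i) :=
    fun x => flipAt_flipAt x i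
  have : ∑ x : Fin n → Bool, pWt p x * ((if x i then 1 - p else p) * g (flipAt x i)) =
      ∑ x : Fin n → Bool, pWt p x * ((if x i then 1 - p else p) * g x) := by
    rw [← Equiv.sum_comp hinv.toPerm]
    apply Finset.sum_congr rfl
    intro x _
    have h := pWt_flip p x i
    change pWt p (flipAt x i) * ((if flipAt x i i = true then 1 - p else p) *
      g (flipAt (flipAt x i) i)) = _
    rw [flipAt_flipAt]
    have : (if flipAt x i i = true then 1 - p else p) = if x i then p else 1 - p := by
      cases h : x i <;> simp [flipAt, h]
    rw [this, ← mul_assoc, h, mul_assoc]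
  rw [this, ← Finset.sum_add_distrib]
  apply Finset.sum_congr rfl
  intro x _
  split_ifs <;> ring

lemma Av_comm {n : ℕ} (p : ℝ) (i j : Fin n) (g : (Fin n → Bool) → ℝ) :
    Av p i (Av p j g) = Av p j (Av p i g) := by
  by_cases h : i = j
  · rw [h]
  funext x
  simp only [Av, Function.update_comm (Ne.symm h)]
  ring

lemma Av_sub {n : ℕ} (p : ℝ) (i : Fin n) (f g : (Fin n → Bool) → ℝ) :
    Av p i (f - g) = Av p i f - Av p i g := by
  funext x
  simp only [Av, Pi.sub_apply]
  ring

lemma Av_up {n : ℕ} (p : ℝ) (i : Fin n) (g : (Fin n → Bool) → ℝ) (x : Fin n → Bool) (b : Bool) :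
    Av p i g (Function.update x i b) = Av p i g x := by
  simp [Av]

/-- averaging over the first `k` coordinates -/
noncomputable def Pk {n : ℕ} (p : ℝ) : ℕ → ((Fin n → Bool) → ℝ) → ((Fin n → Bool) → ℝ)
  | 0, g => g
  | k + 1, g => if h : k < n then Av p ⟨k, h⟩ (Pk p k g) else Pk p k g

lemma Pk_succ {n : ℕ} (p : ℝ) (i : Fin n) (g : (Fin n → Bool) → ℝ) :
    Pk p (i + 1) g = Av p i (Pk p i g) := by
  simp [Pk]

lemma Pk_sub {n : ℕ} (p : ℝ) (k : ℕ) (f g : (Fin n → Bool) → ℝ) :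
    Pk p k (f - g) = Pk p k f - Pk p k g := by
  induction k with
  | zero => rfl
  | succ k ih =>
    simp only [Pk]
    split_ifs
    · rw [ih, Av_sub]
    · exact ih

lemma Pk_Av {n : ℕ} (p : ℝ) (k : ℕ) (i : Fin n) (g : (Fin n → Bool) → ℝ) :
    Pk p k (Av p i g) = Av p i (Pk p k g) := by
  induction k with
  | zero => rfl
  | succ k ih =>
    simp only [Pk]
    split_ifs
    · rw [ih, Av_comm]
    · exact ih

lemma pE_Pk {n : ℕ} (p : ℝ) (k : ℕ) (g : (Fin n → Bool) → ℝ) :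
    pE p (Pk p k g) = pE p g := by
  induction k with
  | zero => rfl
  | succ k ih =>
    simp only [Pk]
    split_ifs
    · rw [pE_Av, ih]
    · exact ih

lemma Pk_indep {n : ℕ} (p : ℝ) (k : ℕ) (g : (Fin n → Bool) → ℝ) :
    ∀ x y : Fin n → Bool, (∀ j : Fin n, k ≤ j → x j = y j) → Pk p k g x = Pk p k g y := by
  induction k with
  | zero => intro x y h; rw [show x = y from funext fun j => h j (Nat.zero_le _)]
  | succ k ih =>
    intro x y h
    simp only [Pk]
    split_ifs with hk
    · have : ∀ b, Pk p k g (Function.update x ⟨k, hk⟩ b) = Pk p k g (Function.update y ⟨k, hk⟩ b) := by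
        intro b
        apply ih
        intro j hj
        by_cases hjk : j = ⟨k, hk⟩
        · subst hjk; simp
        · rw [Function.update_of_ne hjk, Function.update_of_ne hjk]
          apply h
          have : (j : ℕ) ≠ k := fun h => hjk (Fin.ext h)
          omega
      simp only [Av, this]
    · apply ih
      intro j hj
      omega

lemma Pk_n {n : ℕ} (p : ℝ) (g : (Fin n → Bool) → ℝ) (x : Fin n → Bool) :
    Pk p n g x = pE p g := by
  have : Pk p n g = fun _ => Pk p n g x := by
    funext y
    apply Pk_indep
    intro j hj
    omega
  rw [← pE_Pk p n g, this, pE_const]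

lemma tele {n : ℕ} (p : ℝ) (Φ : ℝ → ℝ) (g : (Fin n → Bool) → ℝ) :
    ∑ i : Fin n, (pE p (fun x => Φ (Pk p i g x)) - pE p (fun x => Φ (Pk p (i + 1) g x))) =
      pE p (fun x => Φ (g x)) - Φ (pE p g) := by
  rw [Fin.sum_univ_eq_sum_range
    (fun i => pE p (fun x => Φ (Pk p i g x)) - pE p (fun x => Φ (Pk p (i + 1) g x))),
    Finset.sum_range_sub']
  simp only [Pk_n, pE_const]
  rfl

lemma pE_Av' {n : ℕ} (p : ℝ) (i : Fin n) (f g : (Fin n → Bool) → ℝ)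
    (h : ∀ x, Av p i f x = g x) : pE p f = pE p g := by
  rw [← pE_Av p i f, funext h]

lemma orth {n : ℕ} (p : ℝ) (i : Fin n) (h : (Fin n → Bool) → ℝ) :
    pE p (fun x => (h x - Av p i h x) ^ 2) =
      pE p (fun x => (h x) ^ 2) - pE p (fun x => (Av p i h x) ^ 2) := by
  rw [← pE_sub]
  rw [← pE_Av p i, ← pE_Av p i (fun x => h x ^ 2 - Av p i h x ^ 2)]
  congr 1
  funext x
  simp [Av]
  ring

noncomputable def dk {n : ℕ} (p : ℝ) (i : Fin n) (g : (Fin n → Bool) → ℝ) :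
    (Fin n → Bool) → ℝ := Pk p i g - Pk p (i + 1) g

lemma sum_dk_sq {n : ℕ} (p : ℝ) (g : (Fin n → Bool) → ℝ) :
    ∑ i : Fin n, pE p (fun x => (dk p i g x) ^ 2) = pE p (fun x => g x ^ 2) - (pE p g) ^ 2 := by
  rw [← tele p (fun y => y ^ 2) g]
  apply Finset.sum_congr rfl
  intro i _
  simp only [dk, Pk_succ, Pi.sub_apply]
  exact orth p i _

lemma dk_sub_Av {n : ℕ} (p : ℝ) (i k : Fin n) (g : (Fin n → Bool) → ℝ) :
    dk p k g - Av p i (dk p k g) = dk p k (g - Av p i g) := by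
  simp only [dk, Av_sub, Pk_sub, Pk_Av]
  abel

lemma sum_dir {n : ℕ} (p : ℝ) (i : Fin n) (g : (Fin n → Bool) → ℝ) :
    ∑ k : Fin n, pE p (fun x => (dk p k g x - Av p i (dk p k g) x) ^ 2) ≤
      pE p (fun x => (g x - Av p i g x) ^ 2) := by
  have : ∀ k : Fin n, ∀ x, dk p k g x - Av p i (dk p k g) x = dk p k (g - Av p i g) x := by
    intro k x; rw [← dk_sub_Av]; rfl
  simp only [this]
  rw [sum_dk_sq]
  have := sq_nonneg (pE p (g - Av p i g))
  simp only [Pi.sub_apply]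
  linarith

lemma pE_abs_Pk {n : ℕ} {p : ℝ} (hp0 : 0 < p) (hp : p < 1 / 2) (k : ℕ)
    (g : (Fin n → Bool) → ℝ) : pE p (fun x => |Pk p k g x|) ≤ pE p (fun x => |g x|) := by
  induction k with
  | zero => exact le_rfl
  | succ k ih =>
    simp only [Pk]
    split_ifs with hk
    · refine le_trans ?_ ih
      rw [← pE_Av p ⟨k, hk⟩ (fun x => |Pk p k g x|)]
      apply pE_mono hp0 hp
      intro x
      simp only [Av]
      refine (abs_add_le _ _).trans ?_
      rw [abs_mul, abs_mul, abs_of_pos hp0, abs_of_pos (by linarith : 0 < 1 - p)]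
    · exact ih

lemma abs_dk {n : ℕ} {p : ℝ} (hp0 : 0 < p) (hp : p < 1 / 2) (i : Fin n)
    (g : (Fin n → Bool) → ℝ) :
    pE p (fun x => |dk p i g x|) ≤ pE p (fun x => |g x - Av p i g x|) := by
  have : dk p i g = Pk p i (g - Av p i g) := by
    rw [dk, Pk_succ, Pk_sub, Pk_Av]
  rw [this]
  exact pE_abs_Pk hp0 hp i _

/-! entropy -/

noncomputable def hell {n : ℕ} (i : Fin n) (G : (Fin n → Bool) → ℝ) (x : Fin n → Bool) : ℝ :=
  (√(G (Function.update x i true)) - √(G (Function.update x i false))) ^ 2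

lemma sqrt_cvx {p a b c d : ℝ} (hp0 : 0 < p) (hp : p < 1 / 2) (ha : 0 ≤ a) (hb : 0 ≤ b)
    (hc : 0 ≤ c) (hd : 0 ≤ d) :
    (√(p * a + (1 - p) * b) - √(p * c + (1 - p) * d)) ^ 2 ≤
      p * (√a - √c) ^ 2 + (1 - p) * (√b - √d) ^ 2 := by
  have hq : 0 < 1 - p := by linarith
  have h1 : p * (√a * √c) + (1 - p) * (√b * √d) ≤
      √(p * a + (1 - p) * b) * √(p * c + (1 - p) * d) := by
    rw [← Real.sqrt_mul (by positivity : 0 ≤ p * a + (1 - p) * b)]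
    apply Real.le_sqrt_of_sq_le
    have ea := Real.sq_sqrt ha
    have eb := Real.sq_sqrt hb
    have ec := Real.sq_sqrt hc
    have ed := Real.sq_sqrt hd
    have : 0 ≤ p * (1 - p) * (√a * √d - √b * √c) ^ 2 := by positivity
    calc _ ≤ (p * √a ^ 2 + (1 - p) * √b ^ 2) * (p * √c ^ 2 + (1 - p) * √d ^ 2) := by
          linarith
      _ = _ := by rw [ea, eb, ec, ed]
  have e1 := Real.sq_sqrt (by positivity : 0 ≤ p * a + (1 - p) * b)
  have e2 := Real.sq_sqrt (by positivity : 0 ≤ p * c + (1 - p) * d)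
  simp only [sub_sq]
  rw [e1, e2, Real.sq_sqrt ha, Real.sq_sqrt hb, Real.sq_sqrt hc, Real.sq_sqrt hd]
  linarith

lemma Av_nonneg {n : ℕ} {p : ℝ} (hp0 : 0 < p) (hp : p < 1 / 2) (i : Fin n)
    {G : (Fin n → Bool) → ℝ} (hG : ∀ x, 0 ≤ G x) (x) : 0 ≤ Av p i G x := by
  have hq : 0 < 1 - p := by linarith
  have h1 := hG (Function.update x i true)
  have h2 := hG (Function.update x i false)
  unfold Av
  positivity

lemma Pk_nonneg {n : ℕ} {p : ℝ} (hp0 : 0 < p) (hp : p < 1 / 2) (k : ℕ)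
    {G : (Fin n → Bool) → ℝ} (hG : ∀ x, 0 ≤ G x) : ∀ x, 0 ≤ Pk p k G x := by
  induction k with
  | zero => exact hG
  | succ k ih =>
    simp only [Pk]
    split_ifs with hk
    · exact Av_nonneg hp0 hp _ ih
    · exact ih

lemma hell_Av {n : ℕ} {p : ℝ} (hp0 : 0 < p) (hp : p < 1 / 2) (i j : Fin n)
    {G : (Fin n → Bool) → ℝ} (hG : ∀ x, 0 ≤ G x) :
    pE p (hell i (Av p j G)) ≤ pE p (hell i G) := by
  by_cases h : i = j
  · subst h
    apply pE_mono hp0 hp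
    intro x
    simp only [hell, Av_up, sub_self]
    rw [zero_pow two_ne_zero]
    exact sq_nonneg _
  · rw [← pE_Av p j (hell i G)]
    apply pE_mono hp0 hp
    intro x
    simp only [hell, Av]
    simp only [Function.update_comm h]
    exact sqrt_cvx hp0 hp (hG _) (hG _) (hG _) (hG _)

lemma hell_Pk {n : ℕ} {p : ℝ} (hp0 : 0 < p) (hp : p < 1 / 2) (i : Fin n) (k : ℕ)
    {G : (Fin n → Bool) → ℝ} (hG : ∀ x, 0 ≤ G x) :
    pE p (hell i (Pk p k G)) ≤ pE p (hell i G) := by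
  induction k with
  | zero => exact le_rfl
  | succ k ih =>
    simp only [Pk]
    split_ifs with hk
    · exact (hell_Av hp0 hp _ _ (Pk_nonneg hp0 hp k hG)).trans ih
    · exact ih

lemma lsK_pos {p : ℝ} (hp0 : 0 < p) (hp : p < 1 / 2) : 0 < lsK p := by
  have := tau_pos hp0 hp
  unfold tau at this
  unfold lsK
  apply div_pos _ (by linarith)
  have : 0 < 1 - p := by linarith
  apply mul_pos (by positivity) (by linarith)

lemma ent_le_hell {n : ℕ} {p : ℝ} (hp0 : 0 < p) (hp : p < 1 / 2)
    {G : (Fin n → Bool) → ℝ} (hG : ∀ x, 0 ≤ G x) :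
    pE p (fun x => G x * Real.log (G x)) - pE p G * Real.log (pE p G) ≤
      ∑ i : Fin n, lsK p * pE p (hell i G) := by
  rw [← tele p (fun y => y * Real.log y) G]
  apply Finset.sum_le_sum
  intro i _
  refine le_trans ?_ (mul_le_mul_of_nonneg_left (hell_Pk hp0 hp i i hG) (lsK_pos hp0 hp).le)
  have hN := Pk_nonneg hp0 hp i hG
  rw [Pk_succ]
  generalize Pk p i G = H at *
  rw [← pE_Av p i (fun x => H x * Real.log (H x)), ← pE_sub, ← pE_smul]
  apply pE_mono hp0 hp
  intro x
  exact lsi_two hp0 hp (hN _) (hN _)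

lemma lsi {n : ℕ} {p : ℝ} (hp0 : 0 < p) (hp : p < 1 / 2) (g : (Fin n → Bool) → ℝ) :
    pE p (fun x => g x ^ 2 * Real.log (g x ^ 2)) -
        pE p (fun x => g x ^ 2) * Real.log (pE p (fun x => g x ^ 2)) ≤
      lsK p / (p * (1 - p)) * ∑ i : Fin n, pE p (fun x => (g x - Av p i g x) ^ 2) := by
  have hq : 0 < 1 - p := by linarith
  refine (ent_le_hell hp0 hp (G := fun x => g x ^ 2) (fun x => sq_nonneg _)).trans ?_
  rw [Finset.mul_sum]
  apply Finset.sum_le_sum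
  intro i _
  rw [← pE_Av p i (fun x => (g x - Av p i g x) ^ 2), ← pE_smul, ← pE_smul]
  apply pE_mono hp0 hp
  intro x
  have : lsK p / (p * (1 - p)) * Av p i (fun x => (g x - Av p i g x) ^ 2) x =
      lsK p * (g (Function.update x i true) - g (Function.update x i false)) ^ 2 := by
    simp only [Av, Function.update_idem]
    field_simp
    ring
  rw [this]
  apply mul_le_mul_of_nonneg_left _ (lsK_pos hp0 hp).le
  simp only [hell, Real.sqrt_sq_eq_abs]
  exact sq_le_sq.2 (abs_abs_sub_abs_le _ _)

lemma tangent {s d : ℝ} (hs : 0 < s) :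
    2 * (d ^ 2 * Real.log s + d ^ 2 - s * |d|) ≤ d ^ 2 * Real.log (d ^ 2) := by
  by_cases hd : d = 0
  · simp [hd]
  have hd' : 0 < |d| := abs_pos.2 hd
  have h := Real.log_le_sub_one_of_pos (div_pos hs hd')
  rw [Real.log_div hs.ne' hd'.ne'] at h
  rw [← sq_abs d, Real.log_pow]
  have := mul_le_mul_of_nonneg_left h (sq_nonneg |d|)
  have e : |d| ^ 2 * (s / |d| - 1) = s * |d| - |d| ^ 2 := by field_simp
  rw [e] at this
  push_cast
  linarith

/-- for every `S > 0`, `M log S + M - S e² ≤ Ent(d²)`. -/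
lemma ent_lower {n : ℕ} {p : ℝ} (hp0 : 0 < p) (hp : p < 1 / 2) (d : (Fin n → Bool) → ℝ)
    {S e : ℝ} (hS : 0 < S) (he : pE p (fun x => |d x|) ≤ e) :
    pE p (fun x => d x ^ 2) * Real.log S + pE p (fun x => d x ^ 2) - S * e ^ 2 ≤
      pE p (fun x => d x ^ 2 * Real.log (d x ^ 2)) -
        pE p (fun x => d x ^ 2) * Real.log (pE p (fun x => d x ^ 2)) := by
  have base : ∀ s : ℝ, 0 < s → 2 * (pE p (fun x => d x ^ 2) * Real.log s +
      pE p (fun x => d x ^ 2) - s * e) ≤ pE p (fun x => d x ^ 2 * Real.log (d x ^ 2)) := by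
    intro s hs
    have h1 := pE_mono hp0 hp (f := fun x => 2 * (Real.log s * d x ^ 2 + d x ^ 2 - s * |d x|))
      (g := fun x => d x ^ 2 * Real.log (d x ^ 2)) (fun x => by
        have := tangent (d := d x) hs
        linarith)
    rw [pE_smul, pE_sub, pE_add, pE_smul, pE_smul] at h1
    have := mul_le_mul_of_nonneg_left he hs.le
    linarith
  have hM0 : 0 ≤ pE p (fun x => d x ^ 2) := by
    rw [← pE_const (n := n) p 0]
    exact pE_mono hp0 hp fun x => sq_nonneg _
  have he0 : 0 ≤ e := by
    refine le_trans ?_ he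
    rw [← pE_const (n := n) p 0]
    exact pE_mono hp0 hp fun x => abs_nonneg _
  generalize pE p (fun x => d x ^ 2) = M at *
  generalize pE p (fun x => d x ^ 2 * Real.log (d x ^ 2)) = B at *
  rcases hM0.eq_or_lt with h0 | hM
  · rw [← h0] at base ⊢
    simp only [zero_mul, zero_add, zero_sub, sub_zero] at base ⊢
    by_cases hz : e = 0
    · have := base 1 one_pos
      rw [hz] at this ⊢
      linarith
    · have hep : 0 < e := lt_of_le_of_ne he0 (Ne.symm hz)
      have := base (S * e / 2) (by positivity)
      linarith
  · have hr : 0 < √(S * M) := by positivity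
    have h := base (√(S * M)) hr
    rw [Real.log_sqrt (by positivity), Real.log_mul hS.ne' hM.ne'] at h
    have hsq := Real.sq_sqrt (by positivity : 0 ≤ S * M)
    have hsm : √(S * M) = √S * √M := Real.sqrt_mul hS.le M
    have := sq_nonneg (√S * e - √M)
    have e1 := Real.sq_sqrt hS.le
    have e2 := Real.sq_sqrt hM.le
    rw [sub_sq, mul_pow, e1, e2] at this
    rw [hsm] at h
    linarith

lemma ind_eq {n : ℕ} (f : (Fin n → Bool) → Bool) (i : Fin n) (x : Fin n → Bool) :
    (if f x ≠ f (flipAt x i) then (1 : ℝ) else 0) =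
      if f (Function.update x i true) ≠ f (Function.update x i false) then 1 else 0 := by
  have h1 : Function.update x i (x i) = x := Function.update_eq_self i x
  cases h : x i
  · rw [h] at h1
    simp only [flipAt, h, h1, Bool.not_false]
    simp only [ne_comm]
  · rw [h] at h1
    simp only [flipAt, h, h1, Bool.not_true]

lemma infl_abs {n : ℕ} {p : ℝ} (hp0 : 0 < p) (hp : p < 1 / 2) (f : (Fin n → Bool) → Bool)
    (i : Fin n) :
    pE p (fun x => |(fun x => if f x then (1 : ℝ) else 0) x -
      Av p i (fun x => if f x then (1 : ℝ) else 0) x|) = 2 * p * (1 - p) * pInfl p f i := by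
  have hq : 0 < 1 - p := by linarith
  unfold pInfl
  rw [← pE_smul]
  apply pE_Av' p i
  intro x
  simp only [ind_eq]
  simp only [Av, Function.update_idem]
  cases f (Function.update x i true) <;> cases f (Function.update x i false) <;>
    simp [abs_of_pos hp0, abs_of_pos hq, abs_sub_comm p 1] <;> ring

lemma infl_sq {n : ℕ} {p : ℝ} (hp0 : 0 < p) (hp : p < 1 / 2) (f : (Fin n → Bool) → Bool)
    (i : Fin n) :
    pE p (fun x => ((fun x => if f x then (1 : ℝ) else 0) x -
      Av p i (fun x => if f x then (1 : ℝ) else 0) x) ^ 2) = p * (1 - p) * pInfl p f i := by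
  unfold pInfl
  rw [← pE_smul]
  apply pE_Av' p i
  intro x
  simp only [ind_eq]
  simp only [Av, Function.update_idem]
  cases f (Function.update x i true) <;> cases f (Function.update x i false) <;>
    simp <;> ring

/-- Biased-measure form of the main theorem for Boolean functions: for `0 < p < 1/2`
and a non-constant Boolean `f` with variance `σ² > 0` under `μ_p`,
`Σ_i I_i² ≥ (σ²/(4p²(1-p)²)) · exp(-(Σ_i I_i)/(C(p)σ²))`. -/
theorem biased_sum_sq_influences {n : ℕ} (p : ℝ) (hp0 : 0 < p) (hp : p < 1 / 2)
    (f : (Fin n → Bool) → Bool) (hnc : ∃ x y, f x ≠ f y)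
    (hσ : 0 < pE p (fun x => (if f x then (1 : ℝ) else 0) ^ 2) -
        (pE p (fun x => if f x then (1 : ℝ) else 0)) ^ 2) :
    ∑ i : Fin n, (pInfl p f i) ^ 2 ≥
      (pE p (fun x => (if f x then (1 : ℝ) else 0) ^ 2) -
          (pE p (fun x => if f x then (1 : ℝ) else 0)) ^ 2) / (4 * p ^ 2 * (1 - p) ^ 2) *
        Real.exp (-(∑ i : Fin n, pInfl p f i) /
          (lsConst p * (pE p (fun x => (if f x then (1 : ℝ) else 0) ^ 2) -
            (pE p (fun x => if f x then (1 : ℝ) else 0)) ^ 2))) := by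
  have hq : 0 < 1 - p := by linarith
  obtain ⟨F, hF⟩ : ∃ F : (Fin n → Bool) → ℝ, F = fun x => if f x then (1 : ℝ) else 0 := ⟨_, rfl⟩
  have hV : pE p (fun x => (if f x then (1 : ℝ) else 0) ^ 2) -
        (pE p (fun x => if f x then (1 : ℝ) else 0)) ^ 2 =
        pE p (fun x => F x ^ 2) - pE p F ^ 2 := by rw [hF]
  rw [hV] at hσ ⊢
  generalize hVV : pE p (fun x => F x ^ 2) - pE p F ^ 2 = V at *
  have hJ := infl_abs hp0 hp f
  have hD := infl_sq hp0 hp f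
  rw [← hF] at hJ hD
  have main : ∀ S : ℝ, 0 < S → V * Real.log S + V -
      S * ∑ i : Fin n, (2 * p * (1 - p) * pInfl p f i) ^ 2 ≤
      lsK p * ∑ i : Fin n, pInfl p f i := by
    intro S hS
    have h1 : ∀ k : Fin n, pE p (fun x => dk p k F x ^ 2) * Real.log S +
        pE p (fun x => dk p k F x ^ 2) - S * (2 * p * (1 - p) * pInfl p f k) ^ 2 ≤
        lsK p / (p * (1 - p)) *
          ∑ i : Fin n, pE p (fun x => (dk p k F x - Av p i (dk p k F) x) ^ 2) := by
      intro k
      refine le_trans (ent_lower hp0 hp (dk p k F) hS ?_) (lsi hp0 hp _)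
      rw [← hJ k]
      exact abs_dk hp0 hp k F
    have h2 := Finset.sum_le_sum fun k (_ : k ∈ univ) => h1 k
    rw [Finset.sum_sub_distrib, Finset.sum_add_distrib, ← Finset.sum_mul, ← Finset.mul_sum,
      ← Finset.mul_sum, sum_dk_sq, hVV, Finset.sum_comm] at h2
    refine h2.trans ?_
    have h3 := Finset.sum_le_sum fun i (_ : i ∈ univ) => sum_dir p i F
    simp only [hD] at h3
    rw [← Finset.mul_sum] at h3
    have hc : 0 ≤ lsK p / (p * (1 - p)) := by
      have := lsK_pos hp0 hp
      positivity
    refine (mul_le_mul_of_nonneg_left h3 hc).trans_eq ?_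
    field_simp
  have hS := main (Real.exp (lsK p * (∑ i : Fin n, pInfl p f i) / V)) (Real.exp_pos _)
  rw [Real.log_exp, mul_div_cancel₀ _ hσ.ne'] at hS
  have hC : -(∑ i : Fin n, pInfl p f i) / (lsConst p * V) =
      -(lsK p * (∑ i : Fin n, pInfl p f i) / V) := by
    have hl := tau_pos hp0 hp
    unfold tau at hl
    have hl' : 0 < Real.log (1 - p) - Real.log p := by linarith
    have hd : 0 < 1 - 2 * p := by linarith
    have : lsConst p = (lsK p)⁻¹ := by
      unfold lsConst lsK
      rw [inv_div, div_mul_div_comm, mul_one]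
    rw [this, neg_div]
    have := lsK_pos hp0 hp
    field_simp
  have hsum : ∑ i : Fin n, (2 * p * (1 - p) * pInfl p f i) ^ 2 =
      4 * p ^ 2 * (1 - p) ^ 2 * ∑ i : Fin n, pInfl p f i ^ 2 := by
    rw [Finset.mul_sum]
    exact Finset.sum_congr rfl fun i _ => by ring
  rw [hsum] at hS
  rw [hC, Real.exp_neg, ge_iff_le, ← div_eq_mul_inv, div_div, div_le_iff₀ (by positivity)]
  linarith
end

section
/- Let μ_0, μ_1, v_0, v_1 be positive reals satisfying μ_0 + μ_1 = 2, v_0 ≥ μ_0², v_1 ≥ μ_1², and set v = (v_0 + v_1)/2. Then v_0·log(v_0/μ_0²) + v_1·log(v_1/μ_1²) + [ v_0 + v_1 − 2·√(v_0 − μ_0²)·√(v_1 − μ_1²) − 2 μ_0 μ_1 ] ≥ 2 v log v. -/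
lemma aux_nonneg (y : ℝ) (hy : 0 ≤ y) :
    0 ≤ 1 - (Real.cosh y)⁻¹ + Real.log (Real.cosh y) - y * (Real.sinh y / Real.cosh y) := by
  set f : ℝ → ℝ := fun y =>
    1 - (Real.cosh y)⁻¹ + Real.log (Real.cosh y) - y * (Real.sinh y / Real.cosh y) with hf
  have hd : ∀ x, HasDerivAt f ((Real.sinh x - x) / Real.cosh x ^ 2) x := by
    intro x
    have hc := Real.hasDerivAt_cosh x
    have hs := Real.hasDerivAt_sinh x
    have hp : Real.cosh x ≠ 0 := (Real.cosh_pos x).ne'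
    have h := (((hasDerivAt_const x (1:ℝ)).sub (hc.inv hp)).add (hc.log hp)).sub
      ((hasDerivAt_id x).mul (hs.div hc hp))
    refine HasDerivAt.congr_deriv h ?_
    have := Real.cosh_sq x
    simp only [id, Pi.div_apply]
    field_simp
    linear_combination (-x) * this
  have hm : MonotoneOn f (Set.Ici 0) := by
    apply monotoneOn_of_deriv_nonneg (convex_Ici 0)
    · exact fun x _ => (hd x).continuousAt.continuousWithinAt
    · exact fun x _ => (hd x).differentiableAt.differentiableWithinAt
    · intro x hx
      rw [interior_Ici] at hx
      rw [(hd x).deriv]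
      have := Real.self_le_sinh_iff.2 (le_of_lt hx)
      exact div_nonneg (by linarith) (by positivity)
  have := hm (Set.mem_Ici.2 le_rfl) (Set.mem_Ici.2 hy) hy
  simpa [hf] using this

lemma aux_cosh (y : ℝ) :
    0 ≤ Real.cosh y - 1 + Real.cosh y * Real.log (Real.cosh y) - y * Real.sinh y := by
  have key : ∀ y : ℝ, 0 ≤ y →
      0 ≤ Real.cosh y - 1 + Real.cosh y * Real.log (Real.cosh y) - y * Real.sinh y := by
    intro y hy
    have hp := Real.cosh_pos y
    have h := mul_nonneg hp.le (aux_nonneg y hy)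
    have e : Real.cosh y * (1 - (Real.cosh y)⁻¹ + Real.log (Real.cosh y)
        - y * (Real.sinh y / Real.cosh y)) =
        Real.cosh y - 1 + Real.cosh y * Real.log (Real.cosh y) - y * Real.sinh y := by
      field_simp
    rwa [e] at h
  rcases le_total 0 y with h | h
  · exact key y h
  · have := key (-y) (by linarith)
    simpa using this

lemma aux_gibbs (m v w : ℝ) (hm : 0 < m) (hv : 0 < v) (hw : 0 < w) :
    w * (Real.log m + Real.log v - Real.log w) ≤ m * v - w := by
  have h := Real.log_le_sub_one_of_pos (show 0 < m * v / w by positivity)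
  rw [Real.log_div (by positivity) hw.ne', Real.log_mul hm.ne' hv.ne'] at h
  have := mul_le_mul_of_nonneg_left h hw.le
  have e : w * (m * v / w - 1) = m * v - w := by field_simp
  linarith

/-- The key inequality in the inductive proof of the functional isoperimetric inequality:
for positive `μ₀, μ₁, v₀, v₁` with `μ₀ + μ₁ = 2`, `v₀ ≥ μ₀²`, `v₁ ≥ μ₁²` and
`v = (v₀ + v₁)/2`,
`v₀ log(v₀/μ₀²) + v₁ log(v₁/μ₁²) + [v₀ + v₁ - 2√(v₀-μ₀²)√(v₁-μ₁²) - 2μ₀μ₁] ≥ 2v log v`. -/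
theorem inductive_step_inequality (μ₀ μ₁ v₀ v₁ : ℝ)
    (hμ₀ : 0 < μ₀) (hμ₁ : 0 < μ₁) (hv₀ : 0 < v₀) (hv₁ : 0 < v₁)
    (hsum : μ₀ + μ₁ = 2) (h₀ : μ₀ ^ 2 ≤ v₀) (h₁ : μ₁ ^ 2 ≤ v₁) :
    v₀ * Real.log (v₀ / μ₀ ^ 2) + v₁ * Real.log (v₁ / μ₁ ^ 2) +
        (v₀ + v₁ - 2 * Real.sqrt (v₀ - μ₀ ^ 2) * Real.sqrt (v₁ - μ₁ ^ 2) - 2 * μ₀ * μ₁) ≥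
      2 * ((v₀ + v₁) / 2) * Real.log ((v₀ + v₁) / 2) := by
  obtain ⟨m, y, e0, e1⟩ : ∃ m y : ℝ, v₀ = Real.exp m * Real.exp (-y) ∧
      v₁ = Real.exp m * Real.exp y := by
    refine ⟨(Real.log v₀ + Real.log v₁) / 2, (Real.log v₁ - Real.log v₀) / 2, ?_, ?_⟩
    · rw [← Real.exp_add]; ring_nf; rw [Real.exp_log hv₀]
    · rw [← Real.exp_add]; ring_nf; rw [Real.exp_log hv₁]
  have l0 : Real.log v₀ = m - y := by
    rw [e0, ← Real.exp_add, Real.log_exp]; ring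
  have l1 : Real.log v₁ = m + y := by
    rw [e1, ← Real.exp_add, Real.log_exp]
  have hP : 0 < Real.exp m := Real.exp_pos m
  have hv : (v₀ + v₁) / 2 = Real.exp m * Real.cosh y := by
    rw [e0, e1, Real.cosh_eq]; ring
  have hs : v₁ - v₀ = 2 * (Real.exp m * Real.sinh y) := by
    rw [e0, e1, Real.sinh_eq]; ring
  have hprod : v₀ * v₁ = Real.exp m ^ 2 := by
    have : Real.exp (-y) * Real.exp y = 1 := by rw [← Real.exp_add]; simp
    rw [e0, e1]; linear_combination Real.exp m ^ 2 * this
  have hL : Real.log ((v₀ + v₁) / 2) = m + Real.log (Real.cosh y) := by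
    rw [hv, Real.log_mul hP.ne' (Real.cosh_pos y).ne', Real.log_exp]
  have hvp : 0 < (v₀ + v₁) / 2 := by positivity
  have g0 := aux_gibbs μ₀ _ v₀ hμ₀ hvp hv₀
  have g1 := aux_gibbs μ₁ _ v₁ hμ₁ hvp hv₁
  have hK := mul_nonneg hP.le (aux_cosh y)
  have hCS : √(v₀ - μ₀ ^ 2) * √(v₁ - μ₁ ^ 2) + μ₀ * μ₁ ≤ Real.exp m := by
    have s0 := Real.sq_sqrt (sub_nonneg.2 h₀)
    have s1 := Real.sq_sqrt (sub_nonneg.2 h₁)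
    set s := √(v₀ - μ₀ ^ 2)
    set t := √(v₁ - μ₁ ^ 2)
    apply le_of_sq_le_sq _ hP.le
    rw [← hprod, show v₀ = s ^ 2 + μ₀ ^ 2 by linarith, show v₁ = t ^ 2 + μ₁ ^ 2 by linarith]
    nlinarith [sq_nonneg (s * μ₁ - t * μ₀)]
  rw [Real.log_div hv₀.ne' (by positivity), Real.log_div hv₁.ne' (by positivity),
    Real.log_pow, Real.log_pow]
  rw [l0, hL] at g0
  rw [l1, hL] at g1
  rw [l0, l1, hL]
  push_cast
  have hsumv : μ₀ * ((v₀ + v₁) / 2) + μ₁ * ((v₀ + v₁) / 2) = v₀ + v₁ := by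
    rw [← add_mul, hsum]; ring
  have hK2 : 0 ≤ (v₀ + v₁) / 2 - Real.exp m + (v₀ + v₁) / 2 * Real.log (Real.cosh y)
      - y * ((v₁ - v₀) / 2) := by
    rw [hs, hv]; linarith
  linarith
end

section
/- For every y ∈ [−1, 1], one has 1 − √(1 − y²) ≥ log 2 − H((1−y)/2), where H(x) = −x log x − (1−x) log(1−x) is the natural entropy function (with the convention 0 · log 0 = 0). -/
/-- The natural entropy function `H(x) = -x log x - (1-x) log(1-x)`
(the convention `0 · log 0 = 0` holds since `Real.log 0 = 0`). -/
noncomputable def entH (x : ℝ) : ℝ := -x * Real.log x - (1 - x) * Real.log (1 - x)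

lemma aux_main (y : ℝ) (hy₁ : 0 ≤ y) (hy₂ : y ≤ 1) :
    Real.log 2 ≤ 1 - Real.sqrt (1 - y ^ 2) + Real.binEntropy ((1 - y) / 2) := by
  have hm : MonotoneOn (fun y : ℝ => 1 - Real.sqrt (1 - y ^ 2) + Real.binEntropy ((1 - y) / 2))
      (Set.Icc 0 1) := by
    have hd : ∀ x ∈ interior (Set.Icc (0:ℝ) 1), HasDerivAt
        (fun y : ℝ => 1 - Real.sqrt (1 - y ^ 2) + Real.binEntropy ((1 - y) / 2))
        (x / Real.sqrt (1 - x ^ 2) - Real.artanh x) x := by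
      intro x hx
      rw [interior_Icc] at hx
      obtain ⟨h0, h1⟩ := hx
      have hp : 0 < 1 - x ^ 2 := by nlinarith
      have e1 : HasDerivAt (fun y : ℝ => 1 - y ^ 2) (-(2 * x)) x := by
        simpa using (hasDerivAt_pow 2 x).const_sub 1
      have e2 : HasDerivAt (fun y : ℝ => (1 - y) / 2) (-1 / 2) x :=
        ((hasDerivAt_id x).const_sub 1).div_const 2
      have e3 := (Real.hasDerivAt_binEntropy (p := (1 - x) / 2) (by linarith)
        (by linarith)).comp x e2
      have e4 := ((e1.sqrt hp.ne').const_sub 1).add e3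
      refine HasDerivAt.congr_deriv e4 ?_
      symm
      have hs : Real.sqrt (1 - x ^ 2) ≠ 0 := (Real.sqrt_pos.2 hp).ne'
      rw [Real.artanh_eq_half_log ⟨by linarith, by linarith⟩,
        Real.log_div (by linarith) (by linarith),
        show 1 - (1 - x) / 2 = (1 + x) / 2 by ring,
        Real.log_div (by linarith) (by norm_num), Real.log_div (by linarith) (by norm_num)]
      field_simp
      ring
    apply monotoneOn_of_deriv_nonneg (convex_Icc 0 1)
    · apply Continuous.continuousOn
      fun_prop
    · intro x hx
      exact (hd x hx).differentiableAt.differentiableWithinAt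
    · intro x hx
      rw [(hd x hx).deriv]
      rw [interior_Icc] at hx
      have hx' : x ∈ Set.Ioo (-1:ℝ) 1 := ⟨by linarith [hx.1], hx.2⟩
      rw [← Real.sinh_artanh hx', sub_nonneg, Real.self_le_sinh_iff]
      exact Real.artanh_nonneg hx.1.le
  have h := hm (a := 0) (b := y) (by simp) ⟨hy₁, hy₂⟩ hy₁
  have h2 : Real.binEntropy (1 / 2) = Real.log 2 := by
    rw [one_div, Real.binEntropy_two_inv]
  simp only [sub_zero, h2] at h
  simpa using h

lemma entH_eq (x : ℝ) : entH x = Real.binEntropy x := by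
  unfold entH
  rw [Real.binEntropy, Real.log_inv, Real.log_inv]
  ring

/-- For every `y ∈ [-1,1]`, `1 - √(1-y²) ≥ log 2 - H((1-y)/2)`. -/
theorem one_sub_sqrt_ge_log_two_sub_entropy (y : ℝ) (hy₁ : -1 ≤ y) (hy₂ : y ≤ 1) :
    1 - Real.sqrt (1 - y ^ 2) ≥ Real.log 2 - entH ((1 - y) / 2) := by
  rw [entH_eq]
  rcases le_total 0 y with h | h
  · linarith [aux_main y h hy₂]
  · have := aux_main (-y) (by linarith) (by linarith)
    rw [show (1 - -y) / 2 = 1 - (1 - y) / 2 by ring, Real.binEntropy_one_sub, neg_sq] at this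
    linarith
end

section
/- For every f : {0,1}^n → ℝ, with E(f,f) = E_x Σ_{i=1}^n (f(x) − f(x⊕e_i))² the Dirichlet form and d_1, …, d_n the martingale differences of f, one has E(f,f) ≥ 2 · Σ_{i=1}^n Ent(d_i²). -/
open Finset

/-- Expectation with respect to the uniform measure on the discrete cube `{0,1}^n`. -/
noncomputable def cubeE {n : ℕ} (f : (Fin n → Bool) → ℝ) : ℝ :=
  (∑ x : Fin n → Bool, f x) / 2 ^ n

/-- Influence of the `i`-th variable of a Boolean function,
`I_i(f) = Pr_x[f(x) ≠ f(x ⊕ e_i)]` under the uniform measure. -/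
noncomputable def infl {n : ℕ} (f : (Fin n → Bool) → Bool) (i : Fin n) : ℝ :=
  cubeE (fun x => if f x ≠ f (flipAt x i) then 1 else 0)

/-- Expectation of a Boolean function under the uniform measure. -/
noncomputable def meanB {n : ℕ} (f : (Fin n → Bool) → Bool) : ℝ :=
  cubeE (fun x => if f x then 1 else 0)

/-- Conditional expectation given the first `j` coordinates: `condE f j x` is the
average of `f` over all `y` agreeing with `x` in the first `j` coordinates. -/
noncomputable def condE {n : ℕ} (f : (Fin n → Bool) → ℝ) (j : ℕ) (x : Fin n → Bool) : ℝ :=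
  (∑ y : Fin n → Bool, if ∀ k : Fin n, (k : ℕ) < j → y k = x k then f y else 0) / 2 ^ (n - j)

/-- The Dirichlet form `E(f,f) = E_x Σ_i (f(x) - f(x ⊕ e_i))²`. -/
noncomputable def energy {n : ℕ} (f : (Fin n → Bool) → ℝ) : ℝ :=
  cubeE (fun x => ∑ i : Fin n, (f x - f (flipAt x i)) ^ 2)

/-- Entropy of a nonnegative function: `Ent(g) = E[g log g] - E g · log E g`
(the convention `0 log 0 = 0` holds since `Real.log 0 = 0`). -/
noncomputable def ent {n : ℕ} (g : (Fin n → Bool) → ℝ) : ℝ :=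
  cubeE (fun x => g x * Real.log (g x)) - cubeE g * Real.log (cubeE g)

/-- Append a last coordinate. -/
def sn {n : ℕ} (x : Fin n → Bool) (b : Bool) : Fin (n + 1) → Bool :=
  Fin.snoc (α := fun _ => Bool) x b

lemma sum_sn {n : ℕ} (f : (Fin (n + 1) → Bool) → ℝ) :
    ∑ x, f x = ∑ x : Fin n → Bool, (f (sn x true) + f (sn x false)) := by
  rw [← (Fin.snocEquiv (fun _ : Fin (n + 1) => Bool)).sum_comp, Fintype.sum_prod_type_right]
  apply Finset.sum_congr rfl
  intro x _
  rw [Fintype.sum_bool]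
  rfl

lemma cubeE_add {n : ℕ} (f g : (Fin n → Bool) → ℝ) :
    cubeE (fun x => f x + g x) = cubeE f + cubeE g := by
  unfold cubeE
  rw [Finset.sum_add_distrib, add_div]

lemma cubeE_smul {n : ℕ} (c : ℝ) (f : (Fin n → Bool) → ℝ) :
    cubeE (fun x => c * f x) = c * cubeE f := by
  unfold cubeE
  rw [← Finset.mul_sum, mul_div_assoc]

lemma cubeE_nonneg {n : ℕ} (f : (Fin n → Bool) → ℝ) (h : ∀ x, 0 ≤ f x) : 0 ≤ cubeE f := by
  unfold cubeE
  exact div_nonneg (Finset.sum_nonneg fun x _ => h x) (by positivity)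

lemma cubeE_succ {n : ℕ} (f : (Fin (n + 1) → Bool) → ℝ) :
    cubeE f = (cubeE (fun x => f (sn x true)) + cubeE (fun x => f (sn x false))) / 2 := by
  rw [← cubeE_add]
  unfold cubeE
  rw [sum_sn, pow_succ]
  field_simp

lemma flip_castSucc {n : ℕ} (x : Fin n → Bool) (b : Bool) (i : Fin n) :
    flipAt (sn x b) i.castSucc = sn (flipAt x i) b := by
  unfold flipAt sn
  rw [Fin.snoc_update, Fin.snoc_castSucc]

lemma flip_last {n : ℕ} (x : Fin n → Bool) (b : Bool) :
    flipAt (sn x b) (Fin.last n) = sn x (!b) := by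
  unfold flipAt sn
  rw [Fin.update_snoc_last, Fin.snoc_last]

lemma energy_succ {n : ℕ} (f : (Fin (n + 1) → Bool) → ℝ) :
    energy f = (energy (fun x => f (sn x true)) + energy (fun x => f (sn x false))) / 2
      + cubeE (fun x => (f (sn x true) - f (sn x false)) ^ 2) := by
  unfold energy
  rw [cubeE_succ]
  simp only [Fin.sum_univ_castSucc, flip_castSucc, flip_last, Bool.not_true, Bool.not_false]
  rw [cubeE_add, cubeE_add]
  have : (fun x : Fin n → Bool => (f (sn x false) - f (sn x true)) ^ 2)
      = fun x => (f (sn x true) - f (sn x false)) ^ 2 := by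
    funext x; ring
  rw [this]
  ring

lemma energy_nonneg {n : ℕ} (f : (Fin n → Bool) → ℝ) : 0 ≤ energy f :=
  cubeE_nonneg _ fun _ => Finset.sum_nonneg fun _ _ => sq_nonneg _

lemma energy_parallel {n : ℕ} (f g : (Fin n → Bool) → ℝ) :
    (energy f + energy g) / 2
      = energy (fun x => (f x + g x) / 2) + energy (fun x => (f x - g x) / 2) := by
  unfold energy
  rw [← cubeE_add, ← cubeE_add, div_eq_inv_mul, ← cubeE_smul]
  congr 1
  funext x
  rw [← Finset.sum_add_distrib, ← Finset.sum_add_distrib, Finset.mul_sum]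
  apply Finset.sum_congr rfl
  intro i _
  ring

lemma ent_succ_const {n : ℕ} (g : (Fin (n + 1) → Bool) → ℝ) (h : (Fin n → Bool) → ℝ)
    (hg : ∀ x b, g (sn x b) = h x) : ent g = ent h := by
  unfold ent
  rw [cubeE_succ, cubeE_succ g]
  simp only [hg]
  simp

lemma two_point_aux (a c : ℝ) (hc : 0 < c) (hac : c ≤ a) :
    Real.log (a ^ 2) - Real.log ((a ^ 2 + c ^ 2) / 2) ≤ 1 - c / a := by
  have ha : 0 < a := hc.trans_le hac
  rw [← Real.log_div (by positivity) (by positivity), Real.log_le_iff_le_exp (by positivity)]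
  have hs : 0 ≤ 1 - c / a := by
    rw [sub_nonneg, div_le_one ha]; exact hac
  refine le_trans ?_ (Real.quadratic_le_exp_of_nonneg hs)
  have h1 : a ^ 2 / ((a ^ 2 + c ^ 2) / 2) = 1 / (1 - (1 - c / a) + (1 - c / a) ^ 2 / 2) := by
    have : 1 - (1 - c / a) + (1 - c / a) ^ 2 / 2 = ((a ^ 2 + c ^ 2) / 2) / a ^ 2 := by
      field_simp; ring
    rw [this]; field_simp
  rw [h1]
  set s := 1 - c / a
  have hp : 0 < 1 - s + s ^ 2 / 2 := by nlinarith [sq_nonneg (s - 1)]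
  rw [div_le_iff₀ hp]
  nlinarith [sq_nonneg (s ^ 2)]

lemma two_point_le (a c : ℝ) (hc : 0 ≤ c) (hac : c ≤ a) :
    a ^ 2 * Real.log (a ^ 2) + c ^ 2 * Real.log (c ^ 2)
      - (a ^ 2 + c ^ 2) * Real.log ((a ^ 2 + c ^ 2) / 2) ≤ (a - c) ^ 2 := by
  rcases hc.eq_or_lt with rfl | hc
  · rcases hac.eq_or_lt with rfl | ha
    · simp
    · have h2 : Real.log 2 ≤ 1 := by linarith [Real.log_two_lt_d9]
      have : Real.log ((a ^ 2 + 0 ^ 2) / 2) = Real.log (a ^ 2) - Real.log 2 := by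
        rw [← Real.log_div (by positivity) (by norm_num)]; congr 2; ring
      rw [this]
      nlinarith [sq_nonneg a]
  · let φ : ℝ → ℝ := fun a => (a - c) ^ 2 - (a ^ 2 * Real.log (a ^ 2)
      + c ^ 2 * Real.log (c ^ 2) - (a ^ 2 + c ^ 2) * Real.log ((a ^ 2 + c ^ 2) / 2))
    have hd : ∀ t, c ≤ t → HasDerivAt φ
        (2 * (t - c) - 2 * t * (Real.log (t ^ 2) - Real.log ((t ^ 2 + c ^ 2) / 2))) t := by
      intro t ht
      have htp : 0 < t := hc.trans_le ht
      have hq : HasDerivAt (fun t : ℝ => t ^ 2) (2 * t) t := by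
        simpa using hasDerivAt_pow 2 t
      have hq2 : HasDerivAt (fun t : ℝ => t ^ 2 + c ^ 2) (2 * t) t := hq.add_const _
      have h1 := ((hasDerivAt_id t).sub_const c).pow 2
      have h2 := hq.mul (hq.log (by positivity))
      have h3 := hq2.mul ((hq2.div_const 2).log (by positivity))
      have h4 := h1.sub ((h2.add_const (c ^ 2 * Real.log (c ^ 2))).sub h3)
      refine h4.congr_deriv ?_
      simp only [id]
      field_simp
      ring
    have hm : MonotoneOn φ (Set.Ici c) := by
      apply monotoneOn_of_deriv_nonneg (convex_Ici c)
      · intro t ht; exact (hd t ht).continuousAt.continuousWithinAt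
      · intro t ht; rw [interior_Ici] at ht
        exact (hd t (le_of_lt ht)).differentiableAt.differentiableWithinAt
      · intro t ht; rw [interior_Ici] at ht
        have ht' : c < t := ht
        have htp : 0 < t := hc.trans ht'
        rw [(hd t ht'.le).deriv]
        have := mul_le_mul_of_nonneg_left (two_point_aux t c hc ht'.le)
          (by positivity : 0 ≤ 2 * t)
        have e : 2 * t * (1 - c / t) = 2 * (t - c) := by field_simp
        linarith
    have := hm (Set.mem_Ici.2 le_rfl) (Set.mem_Ici.2 hac) hac
    have h0 : φ c = 0 := by
      simp only [φ]
      rw [show (c ^ 2 + c ^ 2) / 2 = c ^ 2 by ring]; ring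
    rw [h0] at this
    simp only [φ] at this
    linarith

lemma two_point (a c : ℝ) (ha : 0 ≤ a) (hc : 0 ≤ c) :
    a ^ 2 * Real.log (a ^ 2) + c ^ 2 * Real.log (c ^ 2)
      - (a ^ 2 + c ^ 2) * Real.log ((a ^ 2 + c ^ 2) / 2) ≤ (a - c) ^ 2 := by
  rcases le_total c a with h | h
  · exact two_point_le a c hc h
  · have := two_point_le c a ha h
    rw [add_comm (c ^ 2) (a ^ 2)] at this
    linarith [sq_nonneg (a - c), show (a - c) ^ 2 = (c - a) ^ 2 by ring]

lemma cubeE_cs {n : ℕ} (f g : (Fin n → Bool) → ℝ) :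
    (√(cubeE fun x => f x ^ 2) - √(cubeE fun x => g x ^ 2)) ^ 2
      ≤ cubeE fun x => (f x - g x) ^ 2 := by
  have hA : 0 ≤ cubeE fun x => f x ^ 2 := cubeE_nonneg _ fun _ => sq_nonneg _
  have hB : 0 ≤ cubeE fun x => g x ^ 2 := cubeE_nonneg _ fun _ => sq_nonneg _
  have hcs : (cubeE fun x => f x * g x) ^ 2
      ≤ (cubeE fun x => f x ^ 2) * (cubeE fun x => g x ^ 2) := by
    unfold cubeE
    rw [div_pow, div_mul_div_comm, ← sq ((2 : ℝ) ^ n)]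
    gcongr
    exact Finset.sum_mul_sq_le_sq_mul_sq _ _ _
  have e : (cubeE fun x => (f x - g x) ^ 2) = (cubeE fun x => f x ^ 2)
      + (cubeE fun x => g x ^ 2) + (-2) * cubeE fun x => f x * g x := by
    rw [← cubeE_smul, ← cubeE_add, ← cubeE_add]
    congr 1; funext x; ring
  have h := Real.le_sqrt_of_sq_le hcs
  rw [Real.sqrt_mul hA] at h
  rw [e, sub_sq, Real.sq_sqrt hA, Real.sq_sqrt hB]
  linarith

/-- The logarithmic Sobolev inequality on the cube. -/
lemma log_sobolev : ∀ {n : ℕ} (g : (Fin n → Bool) → ℝ),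
    2 * ent (fun x => g x ^ 2) ≤ energy g
  | 0, g => by
    simp [ent, energy, cubeE]
  | n + 1, g => by
    have h1 := log_sobolev (fun x => g (sn x true))
    have h0 := log_sobolev (fun x => g (sn x false))
    have hc := cubeE_cs (fun x => g (sn x true)) (fun x => g (sn x false))
    have hA : 0 ≤ cubeE fun x => g (sn x true) ^ 2 := cubeE_nonneg _ fun _ => sq_nonneg _
    have hB : 0 ≤ cubeE fun x => g (sn x false) ^ 2 := cubeE_nonneg _ fun _ => sq_nonneg _
    have ht := two_point _ _ (Real.sqrt_nonneg (cubeE fun x => g (sn x true) ^ 2))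
      (Real.sqrt_nonneg (cubeE fun x => g (sn x false) ^ 2))
    rw [Real.sq_sqrt hA, Real.sq_sqrt hB] at ht
    rw [energy_succ]
    unfold ent at *
    rw [cubeE_succ, cubeE_succ fun x => g x ^ 2]
    linarith

lemma condE_sn {n : ℕ} (f : (Fin (n + 1) → Bool) → ℝ) (j : ℕ) (hj : j ≤ n)
    (x : Fin n → Bool) (b : Bool) :
    condE f j (sn x b) = condE (fun y => (f (sn y true) + f (sn y false)) / 2) j x := by
  unfold condE
  have key : ∀ (y : Fin n → Bool) (b' : Bool),
      (∀ k : Fin (n + 1), (k : ℕ) < j → sn y b' k = sn x b k)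
        ↔ ∀ k : Fin n, (k : ℕ) < j → y k = x k := by
    intro y b'
    rw [Fin.forall_fin_succ']
    simp [sn, hj]
  rw [sum_sn]
  simp only [key]
  rw [show n + 1 - j = (n - j) + 1 by omega, pow_succ, mul_comm, ← div_div, Finset.sum_div]
  congr 1
  apply Finset.sum_congr rfl
  intro y _
  split_ifs <;> simp

lemma condE_full {n : ℕ} (f : (Fin n → Bool) → ℝ) (x : Fin n → Bool) :
    condE f n x = f x := by
  unfold condE
  have key : ∀ y : Fin n → Bool, (∀ k : Fin n, (k : ℕ) < n → y k = x k) ↔ y = x := by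
    intro y
    simp [funext_iff]
  simp only [key]
  simp

/-- A martingale form of the logarithmic Sobolev inequality on the cube: for every
`f : {0,1}^n → ℝ` with martingale differences `d_i = f_i - f_{i-1}`,
`E(f,f) ≥ 2 · Σ_i Ent(d_i²)`. -/
theorem energy_ge_two_sum_ent_sq_differences {n : ℕ} (f : (Fin n → Bool) → ℝ) :
    energy f ≥ 2 * ∑ i : Fin n,
      ent (fun x => (condE f ((i : ℕ) + 1) x - condE f (i : ℕ) x) ^ 2) := by
  induction n with
  | zero => simpa using energy_nonneg f
  | succ n ih =>
    have ihF := ih (fun y => (f (sn y true) + f (sn y false)) / 2)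
    have hD := log_sobolev (fun y => (f (sn y true) - f (sn y false)) / 2)
    have hpos : 0 ≤ cubeE (fun x => (f (sn x true) - f (sn x false)) ^ 2) :=
      cubeE_nonneg _ fun _ => sq_nonneg _
    rw [energy_succ, energy_parallel, Fin.sum_univ_castSucc]
    have e1 : ∀ i : Fin n, ent (fun x => (condE f ((i.castSucc : ℕ) + 1) x
          - condE f (i.castSucc : ℕ) x) ^ 2)
        = ent (fun x => (condE (fun y => (f (sn y true) + f (sn y false)) / 2) ((i : ℕ) + 1) x
          - condE (fun y => (f (sn y true) + f (sn y false)) / 2) (i : ℕ) x) ^ 2) := by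
      intro i
      apply ent_succ_const
      intro x b
      rw [Fin.val_castSucc, condE_sn f _ (by omega), condE_sn f _ (by omega)]
    have e2 : ent (fun x => (condE f ((Fin.last n : ℕ) + 1) x
          - condE f (Fin.last n : ℕ) x) ^ 2)
        = ent (fun y => ((f (sn y true) - f (sn y false)) / 2) ^ 2) := by
      apply ent_succ_const
      intro x b
      rw [Fin.val_last, condE_full, condE_sn f _ le_rfl, condE_full]
      cases b <;> ring
    rw [Finset.sum_congr rfl fun i _ => e1 i, e2]
    linarith
end

section
/- For every real r ≥ 0, one has (1 + r) log(1 + r) + r log r − (1 + 2r) log((1 + 2r)/2) ≤ 1 / (1 + 2r + 2√(r(1+r))), with the convention 0 · log 0 = 0. -/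
theorem log_aux (t : ℝ) (ht : 1 ≤ t) : Real.log t ≤ (t - t⁻¹) / 2 := by
  rw [← Real.sinh_log (by linarith)]
  exact Real.self_le_sinh_iff.2 (Real.log_nonneg ht)

theorem deriv_aux (x : ℝ) (h0 : 0 < x) (h1 : x < 1) :
    Real.log (1 + x) - Real.log (1 - x) ≤ 2 * (x / Real.sqrt (1 - x ^ 2)) := by
  have ha : 0 < Real.sqrt (1 + x) := Real.sqrt_pos.2 (by linarith)
  have hb : 0 < Real.sqrt (1 - x) := Real.sqrt_pos.2 (by linarith)
  have sa : Real.sqrt (1 + x) ^ 2 = 1 + x := Real.sq_sqrt (by linarith)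
  have sb : Real.sqrt (1 - x) ^ 2 = 1 - x := Real.sq_sqrt (by linarith)
  have hp : Real.sqrt (1 - x ^ 2) = Real.sqrt (1 + x) * Real.sqrt (1 - x) := by
    rw [← Real.sqrt_mul (by linarith)]; congr 1; ring
  have hle : Real.sqrt (1 - x) ≤ Real.sqrt (1 + x) := Real.sqrt_le_sqrt (by linarith)
  have key := log_aux (Real.sqrt (1 + x) / Real.sqrt (1 - x)) ((one_le_div hb).2 hle)
  rw [Real.log_div ha.ne' hb.ne', Real.log_sqrt (by linarith), Real.log_sqrt (by linarith)] at key
  rw [hp]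
  have e : (Real.sqrt (1 + x) / Real.sqrt (1 - x) - (Real.sqrt (1 + x) / Real.sqrt (1 - x))⁻¹) / 2
      = x / (Real.sqrt (1 + x) * Real.sqrt (1 - x)) := by
    field_simp
    rw [sa, sb]; ring
  rw [e] at key
  linarith

theorem main_aux (x : ℝ) (h0 : 0 ≤ x) (h1 : x ≤ 1) :
    (1 + x) * Real.log (1 + x) + (1 - x) * Real.log (1 - x) ≤ 2 * (1 - Real.sqrt (1 - x ^ 2)) := by
  let f : ℝ → ℝ := fun x => 2 * (1 - Real.sqrt (1 - x ^ 2)) -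
    ((1 + x) * Real.log (1 + x) + (1 - x) * Real.log (1 - x))
  have hd : ∀ y ∈ interior (Set.Icc (0:ℝ) 1), HasDerivAt f
      (2 * (y / Real.sqrt (1 - y ^ 2)) - (Real.log (1 + y) - Real.log (1 - y))) y := by
    intro y hy
    rw [interior_Icc] at hy
    obtain ⟨y0, y1⟩ := hy
    have hpos : 0 < 1 - y ^ 2 := by nlinarith
    have hs := Real.sqrt_pos.2 hpos
    have d1 : HasDerivAt (fun x : ℝ => 1 + x) 1 y := (hasDerivAt_id y).const_add 1
    have d2 : HasDerivAt (fun x : ℝ => 1 - x) (-1) y := (hasDerivAt_id y).const_sub 1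
    have d3 : HasDerivAt (fun x : ℝ => 1 - x ^ 2) (-(2 * y)) y := by
      simpa using (hasDerivAt_pow 2 y).const_sub 1
    have p1 : (1 + y) ≠ 0 := by linarith
    have p2 : (1 - y) ≠ 0 := by linarith
    have := (((d3.sqrt hpos.ne').const_sub 1).const_mul 2).sub
      ((d1.mul (d1.log p1)).add (d2.mul (d2.log p2)))
    refine this.congr_deriv ?_
    field_simp
    ring
  have hc : Continuous f := by
    have c := Real.continuous_mul_log
    have c1 : Continuous fun x : ℝ => (1 + x) * Real.log (1 + x) :=
      c.comp (continuous_const.add continuous_id)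
    have c2 : Continuous fun x : ℝ => (1 - x) * Real.log (1 - x) :=
      c.comp (continuous_const.sub continuous_id)
    have c3 : Continuous fun x : ℝ => 2 * (1 - Real.sqrt (1 - x ^ 2)) := by fun_prop
    exact c3.sub (c1.add c2)
  have hm : MonotoneOn f (Set.Icc 0 1) := by
    apply monotoneOn_of_deriv_nonneg (convex_Icc 0 1) hc.continuousOn
    · exact fun y hy => (hd y hy).differentiableAt.differentiableWithinAt
    · intro y hy
      rw [(hd y hy).deriv]
      rw [interior_Icc] at hy
      linarith [deriv_aux y hy.1 hy.2]
  have h := hm (Set.left_mem_Icc.2 zero_le_one) ⟨h0, h1⟩ h0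
  simp only [f] at h
  norm_num at h
  linarith

/-- For every `r ≥ 0`,
`(1+r)log(1+r) + r log r - (1+2r)log((1+2r)/2) ≤ 1/(1 + 2r + 2√(r(1+r)))`
(the convention `0 · log 0 = 0` holds since `Real.log 0 = 0`). -/
theorem technical_inequality (r : ℝ) (hr : 0 ≤ r) :
    (1 + r) * Real.log (1 + r) + r * Real.log r -
        (1 + 2 * r) * Real.log ((1 + 2 * r) / 2) ≤
      1 / (1 + 2 * r + 2 * Real.sqrt (r * (1 + r))) := by
  have hc : 0 < 1 + 2 * r := by linarith
  have key := main_aux (1 / (1 + 2 * r)) (by positivity) ((div_le_one hc).2 (by linarith))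
  have e1 : 1 + 1 / (1 + 2 * r) = (1 + r) / ((1 + 2 * r) / 2) := by field_simp; ring
  have e2 : 1 - 1 / (1 + 2 * r) = r / ((1 + 2 * r) / 2) := by field_simp; ring
  have e3 : Real.sqrt (1 - (1 / (1 + 2 * r)) ^ 2) =
      2 * Real.sqrt (r * (1 + r)) / (1 + 2 * r) := by
    have q := Real.sq_sqrt (show 0 ≤ r * (1 + r) by positivity)
    have : 1 - (1 / (1 + 2 * r)) ^ 2 = (2 * Real.sqrt (r * (1 + r)) / (1 + 2 * r)) ^ 2 := by
      rw [div_pow, div_pow, mul_pow, q]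
      field_simp
      ring
    rw [this, Real.sqrt_sq (by positivity)]
  have l2 : r * Real.log (r / ((1 + 2 * r) / 2)) =
      r * (Real.log r - Real.log ((1 + 2 * r) / 2)) := by
    rcases hr.eq_or_lt with h | h
    · simp [← h]
    · rw [Real.log_div h.ne' (by positivity)]
  rw [e3, e1, e2, Real.log_div (by positivity) (by positivity)] at key
  have hs := Real.sqrt_nonneg (r * (1 + r))
  have sq := Real.sq_sqrt (show 0 ≤ r * (1 + r) by positivity)
  have e4 : 1 / (1 + 2 * r + 2 * Real.sqrt (r * (1 + r))) =
      1 + 2 * r - 2 * Real.sqrt (r * (1 + r)) := by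
    rw [div_eq_iff (by positivity)]
    nlinarith
  rw [e4]
  have k2 := mul_le_mul_of_nonneg_left key (show 0 ≤ (1 + 2 * r) / 2 by positivity)
  have r1 : (1 + 2 * r) / 2 * (2 * (1 - 2 * Real.sqrt (r * (1 + r)) / (1 + 2 * r))) =
      1 + 2 * r - 2 * Real.sqrt (r * (1 + r)) := by field_simp
  have r2 : ∀ A B : ℝ, (1 + 2 * r) / 2 * ((1 + r) / ((1 + 2 * r) / 2) * A +
      r / ((1 + 2 * r) / 2) * B) = (1 + r) * A + r * B := by
    intro A B; field_simp
  rw [r1, r2, l2] at k2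
  linarith
end

section
/- As r → ∞, one has (1 + 2r + 2√(r(1+r))) · ( (1 + r) log(1 + r) + r log r − (1 + 2r) log((1 + 2r)/2) ) → 1. -/
open Filter Topology in
lemma aux_slope : Tendsto (fun x : ℝ => (Real.log (1 + x) - Real.log (1 - x)) / (2 * x))
    (𝓝[>] 0) (𝓝 1) := by
  have h : HasDerivAt (fun x : ℝ => (Real.log (1 + x) - Real.log (1 - x)) / 2) 1 0 := by
    have h1 : HasDerivAt (fun x : ℝ => Real.log (1 + x)) (1 / (1 + 0)) 0 :=
      ((hasDerivAt_id (0:ℝ)).const_add 1).log (by norm_num)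
    have h2 : HasDerivAt (fun x : ℝ => Real.log (1 - x)) (-1 / (1 - 0)) 0 :=
      ((hasDerivAt_id (0:ℝ)).const_sub 1).log (by norm_num)
    exact ((h1.sub h2).div_const 2).congr_deriv (by norm_num)
  have h3 := (hasDerivAt_iff_tendsto_slope.1 h).mono_left
    (nhdsWithin_mono (0:ℝ) (fun x (hx : 0 < x) => ne_of_gt hx))
  refine h3.congr' ?_
  filter_upwards [self_mem_nhdsWithin] with x hx
  have : x ≠ 0 := ne_of_gt hx
  simp [slope_def_field]
  field_simp

open Filter Topology in
lemma aux_quot : Tendsto (fun x : ℝ =>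
    ((1 + x) * Real.log (1 + x) + (1 - x) * Real.log (1 - x)) / x ^ 2)
    (𝓝[>] 0) (𝓝 1) := by
  have hlt : ∀ᶠ x : ℝ in 𝓝[>] 0, x < 1 :=
    mem_nhdsWithin_of_mem_nhds (Iio_mem_nhds (by norm_num))
  refine HasDerivAt.lhopital_zero_nhdsGT
    (f' := fun x => Real.log (1 + x) - Real.log (1 - x)) (g' := fun x => 2 * x) ?_ ?_ ?_ ?_ ?_
    aux_slope
  · filter_upwards [self_mem_nhdsWithin, hlt] with x (hx : 0 < x) hx1
    have n1 : 1 + x ≠ 0 := by linarith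
    have n2 : 1 - x ≠ 0 := by linarith
    have a1 : HasDerivAt (fun x : ℝ => 1 + x) 1 x := (hasDerivAt_id x).const_add 1
    have a2 : HasDerivAt (fun x : ℝ => 1 - x) (-1) x := (hasDerivAt_id x).const_sub 1
    refine ((a1.mul (a1.log n1)).add (a2.mul (a2.log n2))).congr_deriv ?_
    field_simp
    ring
  · refine Eventually.of_forall fun x => ?_
    simpa using hasDerivAt_pow 2 x
  · filter_upwards [self_mem_nhdsWithin] with x (hx : 0 < x)
    positivity
  · have : ContinuousAt (fun x : ℝ =>
        (1 + x) * Real.log (1 + x) + (1 - x) * Real.log (1 - x)) 0 := by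
      have c1 : ContinuousAt (fun x : ℝ => Real.log (1 + x)) 0 :=
        ContinuousAt.log (by fun_prop) (by norm_num)
      have c2 : ContinuousAt (fun x : ℝ => Real.log (1 - x)) 0 :=
        ContinuousAt.log (by fun_prop) (by norm_num)
      fun_prop
    have h := this.tendsto
    simp only [add_zero, sub_zero, Real.log_one, mul_zero] at h
    exact h.mono_left nhdsWithin_le_nhds
  · have : Continuous (fun x : ℝ => x ^ 2) := by fun_prop
    have h := this.tendsto 0
    simp only [ne_eq, OfNat.ofNat_ne_zero, not_false_eq_true, zero_pow] at h
    exact h.mono_left nhdsWithin_le_nhds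

open Filter Topology in
lemma aux_full : Tendsto (fun x : ℝ => (1 + Real.sqrt (1 - x ^ 2)) / 2 *
    (((1 + x) * Real.log (1 + x) + (1 - x) * Real.log (1 - x)) / x ^ 2))
    (𝓝[>] 0) (𝓝 1) := by
  have hc : Continuous (fun x : ℝ => (1 + Real.sqrt (1 - x ^ 2)) / 2) := by fun_prop
  have h := (hc.tendsto 0).mono_left (nhdsWithin_le_nhds (s := Set.Ioi (0:ℝ)))
  have h2 := h.mul aux_quot
  norm_num at h2
  exact h2


/-- As `r → ∞`,
`(1 + 2r + 2√(r(1+r))) · ((1+r)log(1+r) + r log r - (1+2r)log((1+2r)/2)) → 1`. -/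
theorem technical_limit :
    Filter.Tendsto
      (fun r : ℝ => (1 + 2 * r + 2 * Real.sqrt (r * (1 + r))) *
        ((1 + r) * Real.log (1 + r) + r * Real.log r -
          (1 + 2 * r) * Real.log ((1 + 2 * r) / 2)))
      Filter.atTop (nhds 1) := by
  have hx : Filter.Tendsto (fun r : ℝ => (1 + 2 * r)⁻¹) Filter.atTop
      (nhdsWithin 0 (Set.Ioi 0)) := by
    refine tendsto_inv_atTop_nhdsGT_zero.comp ?_
    exact Filter.tendsto_atTop_add_const_left _ _
      (Filter.tendsto_id.const_mul_atTop (by norm_num))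
  refine (aux_full.comp hx).congr' ?_
  filter_upwards [Filter.eventually_gt_atTop 0] with r hr
  have hm : 0 < 1 + 2 * r := by linarith
  simp only [Function.comp]
  have e1 : 1 + (1 + 2 * r)⁻¹ = (1 + r) / ((1 + 2 * r) / 2) := by field_simp; ring
  have e2 : 1 - (1 + 2 * r)⁻¹ = r / ((1 + 2 * r) / 2) := by field_simp; ring
  have e3 : Real.sqrt (1 - (1 + 2 * r)⁻¹ ^ 2) = 2 * Real.sqrt (r * (1 + r)) / (1 + 2 * r) := by
    have : 1 - (1 + 2 * r)⁻¹ ^ 2 = (2 / (1 + 2 * r)) ^ 2 * (r * (1 + r)) := by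
      field_simp; ring
    rw [this, Real.sqrt_mul (by positivity), Real.sqrt_sq (by positivity)]
    ring
  have hm2 : (1 + 2 * r) / 2 ≠ 0 := by positivity
  have hr1 : 1 + r ≠ 0 := by positivity
  rw [e3, e1, e2, Real.log_div hr1 hm2, Real.log_div hr.ne' hm2]
  generalize Real.log ((1 + 2 * r) / 2) = L
  field_simp
  ring
end
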